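/- For agents of the same type θ > 0 colluding by equal effort split with no side payments, mimicking a θ̂-monopoly with θ̂ < θ yields strictly lower per-agent utility than mimicking the θ-monopoly; i.e., for 0 < θ̂ < θ, θ̂(4θθ̂ + 4θ - θ̂)/(8θ(2θ̂+1)²) < θ(4θ+3)/(8(2θ+1)²). -/

import Mathlib

theorem stmt_8 (θ θhat : ℝ) (hθhat : 0 < θhat) (h : θhat < θ) :
    θhat * (4 * θ * θhat + 4 * θ - θhat) / (8 * θ * (2 * θhat + 1) ^ 2) <
    θ * (4 * θ + 3) / (8 * (2 * θ + 1) ^ 2) := by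
  have hθ : 0 < θ := hθhat.trans h
  have h1 : 0 < θ - θhat := sub_pos.2 h
  have h2 : 0 < θ * (4 * θ + 3) - θhat := by nlinarith [mul_pos hθ hθ]
  have h3 := mul_pos h1 h2
  rw [div_lt_div_iff₀ (by positivity) (by positivity)]
  nlinarith [h3]
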